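/- arXiv:2111.03247 — 3 statements merged into one kernel-verified Lean document; each statement's English description precedes it below -/
import Mathlib

section
/- Let ν be a probability distribution on a finite set Ω, let f : Ω → ℝ, and let Γ ≥ 0 and σ > 0 be such that for all γ ∈ [0,Γ], Ent_ν[e^{γf}] ≤ (γ²σ²/2)·E_ν[e^{γf}]. Then for all γ ∈ [0,Γ], log E_ν[ e^{γ(f − E_ν[f])} ] ≤ γ²σ²/2. Consequently, for all t ≥ 0: if t ≤ Γ·σ² then P_ν( f > E_ν[f] + t ) ≤ e^{−t²/(2σ²)}, and if t > Γ·σ² then P_ν( f > E_ν[f] + t ) ≤ e^{Γ²σ²/2}·e^{−Γt}. -/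
/-!
Let `L` be the cumulant generating function of `X`. Since
`Ent[exp (γ X)] = E[exp (γ X)] * (γ * L' γ - L γ)`, the entropy bound says
`γ * L' γ - L γ ≤ γ ^ 2 * σ ^ 2 / 2`, i.e. `γ ↦ L γ / γ - γ * σ ^ 2 / 2` has nonpositive derivative
on `(0, Γ)`. Its limit at `0⁺` is `L' 0 = E[X]`, hence `L γ ≤ γ * E[X] + γ ^ 2 * σ ^ 2 / 2`. The
tail bounds are Chernoff's at the minimizer `γ = t / σ ^ 2` of the exponent
`γ ^ 2 * σ ^ 2 / 2 - γ * t` if it lies in `[0, Γ]`, and at `γ = Γ` otherwise.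
-/

open Finset

noncomputable section
attribute [local instance] Classical.propDecidable

/-- Mean of `f` under a distribution `ν` on a finite set. -/
def expect {Ω : Type*} [Fintype Ω] (ν : Ω → ℝ) (f : Ω → ℝ) : ℝ :=
  ∑ x, ν x * f x

/-- Entropy functional `Ent_ν[g] = E_ν[g log g] − E_ν[g] log E_ν[g]`. -/
def entFun {Ω : Type*} [Fintype Ω] (ν : Ω → ℝ) (g : Ω → ℝ) : ℝ :=
  expect ν (fun x => g x * Real.log (g x)) -
    expect ν g * Real.log (expect ν g)

open MeasureTheory ProbabilityTheory Filter Topology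

section Calculus

variable {L : ℝ → ℝ} {b c : ℝ}

theorem antitoneOn_div_sub_mul (hcont : ContinuousOn L (Set.Ioc 0 b))
    (hdiff : DifferentiableOn ℝ L (Set.Ioo 0 b))
    (hbound : ∀ s ∈ Set.Ioo 0 b, s * deriv L s - L s ≤ c * s ^ 2) :
    AntitoneOn (fun s => L s / s - c * s) (Set.Ioc 0 b) := by
  have hderiv : ∀ s ∈ Set.Ioo 0 b, HasDerivAt (fun s => L s / s - c * s)
      ((deriv L s * s - L s * 1) / s ^ 2 - c * 1) s := fun s hs =>
    ((hdiff.hasDerivAt (isOpen_Ioo.mem_nhds hs)).div (hasDerivAt_id s) hs.1.ne').sub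
      ((hasDerivAt_id s).const_mul c)
  apply antitoneOn_of_deriv_nonpos (convex_Ioc 0 b)
  · exact (hcont.div continuousOn_id fun s hs => hs.1.ne').sub (by fun_prop)
  · rw [interior_Ioc]
    exact fun s hs => (hderiv s hs).differentiableAt.differentiableWithinAt
  · rw [interior_Ioc]
    intro s hs
    rw [(hderiv s hs).deriv, sub_nonpos, div_le_iff₀ (pow_pos hs.1 2)]
    linarith [hbound s hs]

theorem le_mul_add_mul_sq_of_mul_deriv_sub_le {m : ℝ} (hb : 0 ≤ b) (hL₀ : L 0 = 0)
    (hm : HasDerivWithinAt L m (Set.Ioi 0) 0) (hcont : ContinuousOn L (Set.Ioc 0 b))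
    (hdiff : DifferentiableOn ℝ L (Set.Ioo 0 b))
    (hbound : ∀ s ∈ Set.Ioo 0 b, s * deriv L s - L s ≤ c * s ^ 2) :
    L b ≤ b * m + c * b ^ 2 := by
  rcases hb.eq_or_lt with rfl | hb
  · simp [hL₀]
  have hslope : Tendsto (fun s => L s / s) (𝓝[>] 0) (𝓝 m) := by
    simpa [slope_fun_def_field, hL₀] using
      (hasDerivWithinAt_iff_tendsto_slope' Set.self_notMem_Ioi).mp hm
  have hlinear : Tendsto (fun s => c * s) (𝓝[>] 0) (𝓝 0) := by
    simpa using ((continuous_const_mul c).tendsto 0).mono_left nhdsWithin_le_nhds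
  have hlim : Tendsto (fun s => L s / s - c * s) (𝓝[>] 0) (𝓝 m) := by
    simpa using hslope.sub hlinear
  have hle : L b / b - c * b ≤ m := by
    refine ge_of_tendsto hlim ?_
    filter_upwards [Ioc_mem_nhdsGT hb] with s hs
    exact antitoneOn_div_sub_mul hcont hdiff hbound hs ⟨hb, le_rfl⟩ hs.2
  rw [sub_le_iff_le_add, div_le_iff₀ hb] at hle
  linarith

end Calculus

section Measure

variable {Ω : Type*} [MeasurableSpace Ω] {μ : Measure Ω} {X : Ω → ℝ} {Γ σ γ : ℝ}

/-- The entropy `Ent_μ[g] = μ[g log g] - μ[g] log μ[g]`, the counterpart of `entFun` for a measure.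
It is meaningful only if `g` and `g log g` are integrable, as the Bochner integral is `0`
otherwise. -/
def measureEnt (μ : Measure Ω) (g : Ω → ℝ) : ℝ :=
  μ[fun ω => g ω * Real.log (g ω)] - μ[g] * Real.log (μ[g])

theorem measureEnt_exp_mul [NeZero μ] (hγ : γ ∈ interior (integrableExpSet X μ)) :
    measureEnt μ (fun ω => Real.exp (γ * X ω)) =
      mgf X μ γ * (γ * deriv (cgf X μ) γ - cgf X μ γ) := by
  have hpos : 0 < mgf X μ γ :=
    mgf_pos_iff.mpr (integrable_of_mem_integrableExpSet (interior_subset hγ))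
  have hlog : μ[fun ω => Real.exp (γ * X ω) * Real.log (Real.exp (γ * X ω))] =
      γ * μ[fun ω => X ω * Real.exp (γ * X ω)] := by
    rw [← integral_const_mul]
    refine integral_congr_ae (ae_of_all _ fun ω => ?_)
    simp only [Real.log_exp]
    ring
  rw [measureEnt, hlog, deriv_cgf hγ, cgf, ← mgf]
  field_simp

theorem integrableExpSet_subset_sub_const (c : ℝ) :
    integrableExpSet X μ ⊆ integrableExpSet (fun ω => X ω - c) μ := fun γ hγ => by
  simpa only [integrableExpSet, Set.mem_ofPred_eq, mul_sub, Real.exp_sub] using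
    (integrable_of_mem_integrableExpSet hγ).div_const (Real.exp (γ * c))

theorem cgf_sub_const [NeZero μ] (hγ : γ ∈ integrableExpSet X μ) (c : ℝ) :
    cgf (fun ω => X ω - c) μ γ = cgf X μ γ - γ * c := by
  have hpos : 0 < mgf X μ γ := mgf_pos_iff.mpr hγ
  simp only [cgf, sub_eq_add_neg, mgf_add_const]
  rw [Real.log_mul hpos.ne' (Real.exp_ne_zero _), Real.log_exp, mul_neg]

theorem cgf_sub_integral_le [IsProbabilityMeasure μ]
    (hint : Set.Icc 0 Γ ⊆ interior (integrableExpSet X μ))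
    (hEnt : ∀ γ ∈ Set.Icc 0 Γ,
      measureEnt μ (fun ω => Real.exp (γ * X ω)) ≤ γ ^ 2 * σ ^ 2 / 2 * mgf X μ γ)
    (hγ : γ ∈ Set.Icc 0 Γ) :
    cgf (fun ω => X ω - μ[X]) μ γ ≤ γ ^ 2 * σ ^ 2 / 2 := by
  have hdiff : ∀ s ∈ Set.Icc 0 Γ, DifferentiableAt ℝ (cgf X μ) s := fun s hs =>
    (analyticAt_cgf (hint hs)).differentiableAt
  have hzero : (0 : ℝ) ∈ Set.Icc 0 Γ := ⟨le_rfl, hγ.1.trans hγ.2⟩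
  have hderiv₀ : HasDerivAt (cgf X μ) μ[X] 0 := by
    simpa [deriv_cgf_zero (hint hzero)] using (hdiff 0 hzero).hasDerivAt
  have hsub : ∀ s ∈ Set.Ioc 0 γ, s ∈ Set.Icc 0 Γ := fun s hs => ⟨hs.1.le, hs.2.trans hγ.2⟩
  have hbound : ∀ s ∈ Set.Ioo 0 γ,
      s * deriv (cgf X μ) s - cgf X μ s ≤ σ ^ 2 / 2 * s ^ 2 := fun s hs => by
    have hs' := hsub s (Set.Ioo_subset_Ioc_self hs)
    have hpos : 0 < mgf X μ s := 
      mgf_pos (integrable_of_mem_integrableExpSet (interior_subset (hint hs')))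
    have hEnt_s := hEnt s hs'
    rw [measureEnt_exp_mul (hint hs'), mul_comm, mul_le_mul_iff_left₀ hpos] at hEnt_s
    linarith
  have hcgf : cgf X μ γ ≤ γ * μ[X] + σ ^ 2 / 2 * γ ^ 2 :=
    le_mul_add_mul_sq_of_mul_deriv_sub_le hγ.1 cgf_zero hderiv₀.hasDerivWithinAt
      (fun s hs => (hdiff s (hsub s hs)).continuousAt.continuousWithinAt)
      (fun s hs => (hdiff s (hsub s (Set.Ioo_subset_Ioc_self hs))).differentiableWithinAt) hbound
  rw [cgf_sub_const (interior_subset (hint hγ))]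
  linarith

theorem measureReal_ge_le_exp_mul_exp_of_cgf_le [IsFiniteMeasure μ] (hγ : 0 ≤ γ)
    (hint : γ ∈ integrableExpSet X μ) (hcgf : cgf X μ γ ≤ γ ^ 2 * σ ^ 2 / 2) (t : ℝ) :
    μ.real {ω | t ≤ X ω} ≤ Real.exp (γ ^ 2 * σ ^ 2 / 2) * Real.exp (-γ * t) := by
  rw [← Real.exp_add, add_comm]
  exact (measure_ge_le_exp_cgf t hγ hint).trans (by gcongr)

theorem measureReal_ge_le_exp_neg_sq_of_cgf_le [IsFiniteMeasure μ] {t : ℝ} (hσ : 0 < σ)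
    (hint : Set.Icc 0 Γ ⊆ integrableExpSet X μ)
    (hcgf : ∀ γ ∈ Set.Icc 0 Γ, cgf X μ γ ≤ γ ^ 2 * σ ^ 2 / 2) (ht : 0 ≤ t)
    (htΓ : t ≤ Γ * σ ^ 2) :
    μ.real {ω | t ≤ X ω} ≤ Real.exp (-t ^ 2 / (2 * σ ^ 2)) := by
  have hmem : t / σ ^ 2 ∈ Set.Icc 0 Γ :=
    ⟨by positivity, (div_le_iff₀ (pow_pos hσ 2)).mpr htΓ⟩
  refine (measureReal_ge_le_exp_mul_exp_of_cgf_le hmem.1 (hint hmem) (hcgf _ hmem) t).trans_eq ?_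
  rw [← Real.exp_add]
  congr 1
  field_simp
  ring

theorem herbst_argument_general [IsProbabilityMeasure μ] (hΓ : 0 ≤ Γ) (hσ : 0 < σ)
    (hint : Set.Icc 0 Γ ⊆ interior (integrableExpSet X μ))
    (hEnt : ∀ γ ∈ Set.Icc 0 Γ,
      measureEnt μ (fun ω => Real.exp (γ * X ω)) ≤ γ ^ 2 * σ ^ 2 / 2 * mgf X μ γ) :
    (∀ γ ∈ Set.Icc 0 Γ, cgf (fun ω => X ω - μ[X]) μ γ ≤ γ ^ 2 * σ ^ 2 / 2) ∧
    (∀ t : ℝ, 0 ≤ t →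
      (t ≤ Γ * σ ^ 2 →
        μ.real {ω | μ[X] + t < X ω} ≤ Real.exp (-t ^ 2 / (2 * σ ^ 2))) ∧
      (Γ * σ ^ 2 < t →
        μ.real {ω | μ[X] + t < X ω} ≤
          Real.exp (Γ ^ 2 * σ ^ 2 / 2) * Real.exp (-Γ * t))) := by
  have hcgf : ∀ γ ∈ Set.Icc 0 Γ, cgf (fun ω => X ω - μ[X]) μ γ ≤ γ ^ 2 * σ ^ 2 / 2 :=
    fun γ hγ => cgf_sub_integral_le hint hEnt hγ
  have hint_centered : Set.Icc 0 Γ ⊆ integrableExpSet (fun ω => X ω - μ[X]) μ :=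
    (hint.trans interior_subset).trans (integrableExpSet_subset_sub_const _)
  have hmono : ∀ t, μ.real {ω | μ[X] + t < X ω} ≤ μ.real {ω | t ≤ X ω - μ[X]} := fun t =>
    measureReal_mono fun ω (hω : μ[X] + t < X ω) => show t ≤ X ω - μ[X] by linarith
  have hΓ_mem : Γ ∈ Set.Icc 0 Γ := ⟨hΓ, le_rfl⟩
  refine ⟨hcgf, fun t ht => ⟨fun htΓ => (hmono t).trans ?_, fun _ => (hmono t).trans ?_⟩⟩
  · exact measureReal_ge_le_exp_neg_sq_of_cgf_le hσ hint_centered hcgf ht htΓ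
  · exact measureReal_ge_le_exp_mul_exp_of_cgf_le hΓ (hint_centered hΓ_mem) (hcgf Γ hΓ_mem) t

end Measure

section Finite

variable {Ω : Type*} [Fintype Ω] [MeasurableSpace Ω] {ν : Ω → ℝ}

/-- The measure with mass `ν x` at each point `x` of a finite set, through which `expect ν` becomes
an integral. Negative weights are truncated to `0`. -/
def discreteMeasure (ν : Ω → ℝ) : Measure Ω :=
  ∑ x, ENNReal.ofReal (ν x) • Measure.dirac x

theorem isProbabilityMeasure_discreteMeasure (hν₀ : ∀ x, 0 ≤ ν x) (hν₁ : ∑ x, ν x = 1) :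
    IsProbabilityMeasure (discreteMeasure ν) where
  measure_univ := by
    simp [discreteMeasure, ← ENNReal.ofReal_sum_of_nonneg fun x _ => hν₀ x, hν₁]

variable [MeasurableSingletonClass Ω]

theorem integral_discreteMeasure (hν₀ : ∀ x, 0 ≤ ν x) (g : Ω → ℝ) :
    ∫ x, g x ∂discreteMeasure ν = expect ν g := by
  rw [discreteMeasure, integral_finsetSum_measure fun x _ =>
    Integrable.of_finite.smul_measure ENNReal.ofReal_ne_top]
  simp [_root_.expect, hν₀]

theorem measureReal_discreteMeasure (hν₀ : ∀ x, 0 ≤ ν x) (p : Ω → Prop) :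
    (discreteMeasure ν).real {x | p x} = ∑ x ∈ univ.filter p, ν x := by
  rw [← integral_indicator_one (Set.toFinite _).measurableSet, integral_discreteMeasure hν₀]
  simp [_root_.expect, Set.indicator_apply, Finset.sum_filter]

theorem measureEnt_discreteMeasure (hν₀ : ∀ x, 0 ≤ ν x) (g : Ω → ℝ) :
    measureEnt (discreteMeasure ν) g = entFun ν g := by
  simp only [measureEnt, entFun, integral_discreteMeasure hν₀]

end Finite

theorem integrableExpSet_eq_univ {Ω : Type*} [Finite Ω] [MeasurableSpace Ω]
    [MeasurableSingletonClass Ω] {μ : Measure Ω} [IsFiniteMeasure μ] (f : Ω → ℝ) :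
    integrableExpSet f μ = Set.univ :=
  Set.eq_univ_of_forall fun _ => Integrable.of_finite

/-- The Herbst argument: an entropy bound on exponential moments
along `γ ∈ [0,Γ]` yields a bound on the log-moment generating function and hence
Gaussian/exponential tail bounds. -/
theorem herbst_argument {Ω : Type*} [Fintype Ω] (ν : Ω → ℝ)
    (hν₀ : ∀ x, 0 ≤ ν x) (hν₁ : ∑ x, ν x = 1)
    (f : Ω → ℝ) (Γ σ : ℝ) (hΓ : 0 ≤ Γ) (hσ : 0 < σ)
    (hEnt : ∀ γ : ℝ, γ ∈ Set.Icc 0 Γ →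
      entFun ν (fun x => Real.exp (γ * f x)) ≤
        γ ^ 2 * σ ^ 2 / 2 * expect ν (fun x => Real.exp (γ * f x))) :
    (∀ γ : ℝ, γ ∈ Set.Icc 0 Γ →
      Real.log (expect ν (fun x => Real.exp (γ * (f x - expect ν f)))) ≤
        γ ^ 2 * σ ^ 2 / 2) ∧
    (∀ t : ℝ, 0 ≤ t →
      (t ≤ Γ * σ ^ 2 →
        ∑ x ∈ univ.filter (fun x => expect ν f + t < f x), ν x ≤
          Real.exp (-t ^ 2 / (2 * σ ^ 2))) ∧
      (Γ * σ ^ 2 < t →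
        ∑ x ∈ univ.filter (fun x => expect ν f + t < f x), ν x ≤
          Real.exp (Γ ^ 2 * σ ^ 2 / 2) * Real.exp (-Γ * t))) := by
  let : MeasurableSpace Ω := ⊤
  have := isProbabilityMeasure_discreteMeasure hν₀ hν₁
  simpa only [cgf, mgf, integral_discreteMeasure hν₀, measureReal_discreteMeasure hν₀] using
    herbst_argument_general (μ := discreteMeasure ν) hΓ hσ (by simp [integrableExpSet_eq_univ])
      (by simpa only [measureEnt_discreteMeasure hν₀, mgf, integral_discreteMeasure hν₀] using hEnt)
end
end

section
/- Let Q be a row-stochastic matrix on a finite set Ω, reversible with respect to a probability distribution ν (i.e., ν(x)Q(x,y) = ν(y)Q(y,x) for all x,y). Let f : Ω → ℝ and γ ≥ 0. Then 𝓔_Q(e^{γf}, γf) ≤ γ²·v₁(f)·E_ν[e^{γf}], where v₁(f) := max_{x∈Ω} Σ_{y∈Ω} Q(x,y)·(max(f(x) − f(y), 0))². -/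
/-!
A convex function lies above its tangents, so `φ a - φ b ≤ φ' a * (a - b)` for `b ≤ a`. Hence each
product `(φ (f x) - φ (f y)) * (f x - f y)` is at most the derivative at the larger value times the
squared gap. Charging this bound to the endpoint with the larger value and summing against the
symmetric weights `ν x * Q x y` counts every contribution twice, which absorbs the factor `1 / 2`.
The exponential is its own derivative, and the powers of `γ` come from applying this to `γ * f`.
-/

open Finset

noncomputable section
attribute [local instance] Classical.propDecidable

/-- Dirichlet form `𝓔_Q(f,g) = (1/2) Σ_{x,y} ν(x) Q(x,y) (f(x)−f(y))(g(x)−g(y))`. -/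
def dirichletForm {Ω : Type*} [Fintype Ω] (ν : Ω → ℝ) (Q : Ω → Ω → ℝ)
    (f g : Ω → ℝ) : ℝ :=
  (∑ x, ∑ y, ν x * Q x y * (f x - f y) * (g x - g y)) / 2

/-- `v₁(f) = max_x Σ_y Q(x,y) (f(x) − f(y))₊²`. -/
def vOne {Ω : Type*} [Fintype Ω] [Nonempty Ω] (Q : Ω → Ω → ℝ) (f : Ω → ℝ) : ℝ :=
  univ.sup' univ_nonempty (fun x => ∑ y, Q x y * max (f x - f y) 0 ^ 2)

/-- The one-sided carré du champ of `f` at `x`, which counts only the transitions from `x` to points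
where `f` is smaller; `v₁(f)` is its maximum over `x`. -/
def carreDuChampPos {Ω : Type*} [Fintype Ω] (Q : Ω → Ω → ℝ) (f : Ω → ℝ) (x : Ω) : ℝ :=
  ∑ y, Q x y * max (f x - f y) 0 ^ 2

section Convex

variable {S : Set ℝ} {φ : ℝ → ℝ}

theorem convexOn_sub_mul_sub_le_of_le {a b φ' : ℝ} (hφ : ConvexOn ℝ S φ) (ha : a ∈ S) (hb : b ∈ S)
    (hφ' : HasDerivWithinAt φ φ' S a) (hba : b ≤ a) :
    (φ a - φ b) * (a - b) ≤ φ' * (a - b) ^ 2 := by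
  rcases hba.eq_or_lt with rfl | hlt
  · simp
  · have hgap : 0 < a - b := sub_pos.2 hlt
    have htangent : φ a - φ b ≤ φ' * (a - b) := by
      have hslope := hφ.slope_le_of_hasDerivWithinAt hb ha hlt hφ'
      rwa [slope_def_field, div_le_iff₀ hgap] at hslope
    calc (φ a - φ b) * (a - b) ≤ φ' * (a - b) * (a - b) :=
          mul_le_mul_of_nonneg_right htangent hgap.le
      _ = φ' * (a - b) ^ 2 := by ring

theorem convexOn_sub_mul_sub_le {φ' : ℝ → ℝ} (hφ : ConvexOn ℝ S φ)
    (hφ' : ∀ t ∈ S, HasDerivWithinAt φ (φ' t) S t) {a b : ℝ} (ha : a ∈ S) (hb : b ∈ S) :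
    (φ a - φ b) * (a - b) ≤ φ' a * max (a - b) 0 ^ 2 + φ' b * max (b - a) 0 ^ 2 := by
  rcases le_total b a with hba | hab
  · rw [max_eq_left (sub_nonneg.2 hba), max_eq_right (sub_nonpos.2 hba)]
    linarith [convexOn_sub_mul_sub_le_of_le hφ ha hb (hφ' a ha) hba]
  · rw [max_eq_right (sub_nonpos.2 hab), max_eq_left (sub_nonneg.2 hab)]
    linarith [convexOn_sub_mul_sub_le_of_le hφ hb ha (hφ' b hb) hab]

end Convex

theorem sum_sum_add_swap {ι R : Type*} [Fintype ι] [NonAssocSemiring R] (T : ι → ι → R) :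
    ∑ x, ∑ y, (T x y + T y x) = 2 * ∑ x, ∑ y, T x y := by
  simp only [sum_add_distrib]
  rw [sum_comm (f := fun x y => T y x), two_mul]

section DirichletForm

variable {Ω : Type*} [Fintype Ω] {Q : Ω → Ω → ℝ} {ν : Ω → ℝ} {f : Ω → ℝ}

theorem dirichletForm_le_sum_of_le_add_swap {g : Ω → ℝ} {T : Ω → Ω → ℝ}
    (hT : ∀ x y, ν x * Q x y * (f x - f y) * (g x - g y) ≤ T x y + T y x) :
    dirichletForm ν Q f g ≤ ∑ x, ∑ y, T x y := by
  rw [dirichletForm, div_le_iff₀' two_pos, ← sum_sum_add_swap]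
  exact sum_le_sum fun x _ => sum_le_sum fun y _ => hT x y

theorem dirichletForm_comp_le_expect_mul_carreDuChampPos {S : Set ℝ} {φ φ' : ℝ → ℝ}
    (hQ₀ : ∀ x y, 0 ≤ Q x y) (hν₀ : ∀ x, 0 ≤ ν x) (hrev : ∀ x y, ν x * Q x y = ν y * Q y x)
    (hφ : ConvexOn ℝ S φ) (hφ' : ∀ t ∈ S, HasDerivWithinAt φ (φ' t) S t) (hf : ∀ x, f x ∈ S) :
    dirichletForm ν Q (fun x => φ (f x)) f ≤
      expect ν (fun x => φ' (f x) * carreDuChampPos Q f x) := by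
  let T : Ω → Ω → ℝ := fun x y => ν x * Q x y * (φ' (f x) * max (f x - f y) 0 ^ 2)
  have hpair (x y : Ω) :
      ν x * Q x y * (φ (f x) - φ (f y)) * (f x - f y) ≤ T x y + T y x := by
    calc ν x * Q x y * (φ (f x) - φ (f y)) * (f x - f y)
        = ν x * Q x y * ((φ (f x) - φ (f y)) * (f x - f y)) := mul_assoc _ _ _
      _ ≤ ν x * Q x y *
            (φ' (f x) * max (f x - f y) 0 ^ 2 + φ' (f y) * max (f y - f x) 0 ^ 2) :=
          mul_le_mul_of_nonneg_left (convexOn_sub_mul_sub_le hφ hφ' (hf x) (hf y))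
            (mul_nonneg (hν₀ x) (hQ₀ x y))
      _ = T x y + T y x := by simp only [T, mul_add, hrev y x]
  calc dirichletForm ν Q (fun x => φ (f x)) f
      ≤ ∑ x, ∑ y, T x y := dirichletForm_le_sum_of_le_add_swap hpair
    _ = expect ν (fun x => φ' (f x) * carreDuChampPos Q f x) := by
        simp only [T, _root_.expect, carreDuChampPos, mul_sum]
        exact sum_congr rfl fun x _ => sum_congr rfl fun y _ => by ring

variable [Nonempty Ω]

theorem carreDuChampPos_le_vOne (Q : Ω → Ω → ℝ) (f : Ω → ℝ) (x : Ω) :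
    carreDuChampPos Q f x ≤ vOne Q f :=
  le_sup' (carreDuChampPos Q f) (mem_univ x)

theorem vOne_const_mul (Q : Ω → Ω → ℝ) (f : Ω → ℝ) {c : ℝ} (hc : 0 ≤ c) :
    vOne Q (fun x => c * f x) = c ^ 2 * vOne Q f := by
  have hmax (x y : Ω) : max (c * f x - c * f y) 0 = c * max (f x - f y) 0 := by
    rw [mul_max_of_nonneg _ _ hc, mul_sub, mul_zero]
  simp only [vOne, hmax, mul_pow, mul_left_comm _ (c ^ 2), ← mul_sum]
  exact (mul₀_sup' (sq_nonneg c) _ _ _).symm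

theorem dirichlet_exp_bound_vone_general {S : Set ℝ} {φ φ' : ℝ → ℝ}
    (hQ₀ : ∀ x y, 0 ≤ Q x y) (hν₀ : ∀ x, 0 ≤ ν x) (hrev : ∀ x y, ν x * Q x y = ν y * Q y x)
    (hφ : ConvexOn ℝ S φ) (hφ' : ∀ t ∈ S, HasDerivWithinAt φ (φ' t) S t)
    (hφ'₀ : ∀ t ∈ S, 0 ≤ φ' t) (hf : ∀ x, f x ∈ S) :
    dirichletForm ν Q (fun x => φ (f x)) f ≤ vOne Q f * expect ν (fun x => φ' (f x)) := by
  refine (dirichletForm_comp_le_expect_mul_carreDuChampPos hQ₀ hν₀ hrev hφ hφ' hf).trans ?_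
  simp only [_root_.expect, mul_sum]
  refine sum_le_sum fun x _ => ?_
  calc ν x * (φ' (f x) * carreDuChampPos Q f x)
      ≤ ν x * (φ' (f x) * vOne Q f) := by
        gcongr
        exacts [hν₀ x, hφ'₀ _ (hf x), carreDuChampPos_le_vOne Q f x]
    _ = vOne Q f * (ν x * φ' (f x)) := by ring

end DirichletForm

/-- Bound on the Dirichlet form `𝓔_Q(e^{γf}, γf)` in terms of
`v₁(f)` for a reversible chain. -/
theorem dirichlet_exp_bound_vone {Ω : Type*} [Fintype Ω] [Nonempty Ω]
    (Q : Ω → Ω → ℝ) (ν : Ω → ℝ)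
    (hQ₀ : ∀ x y, 0 ≤ Q x y) (hQ₁ : ∀ x, ∑ y, Q x y = 1)
    (hν₀ : ∀ x, 0 ≤ ν x) (hν₁ : ∑ x, ν x = 1)
    (hrev : ∀ x y, ν x * Q x y = ν y * Q y x)
    (f : Ω → ℝ) (γ : ℝ) (hγ : 0 ≤ γ) :
    dirichletForm ν Q (fun x => Real.exp (γ * f x)) (fun x => γ * f x) ≤
      γ ^ 2 * vOne Q f * expect ν (fun x => Real.exp (γ * f x)) := by
  rw [← vOne_const_mul Q f hγ]
  exact dirichlet_exp_bound_vone_general hQ₀ hν₀ hrev convexOn_exp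
    (fun t _ => (Real.hasDerivAt_exp t).hasDerivWithinAt) (fun t _ => (Real.exp_pos t).le)
    (fun _ => Set.mem_univ _)
end
end

section
/- Let Q be a row-stochastic matrix on a finite set Ω, reversible with respect to a probability distribution ν (i.e., ν(x)Q(x,y) = ν(y)Q(y,x) for all x,y). Let κ ≥ 0 and let f : Ω → ℝ be such that f(y) − f(x) ≤ κ whenever Q(x,y) > 0, and let γ ≥ 0. Then 𝓔_Q(e^{γf}, γf) ≤ e^{γκ}·γ²·v₂(f)·E_ν[e^{γf}], where v₂(f) := max_{x∈Ω} Σ_{y∈Ω} Q(x,y)·(max(f(y) − f(x), 0))². -/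
/-!
The edge term `(e^{g x} - e^{g y})(g x - g y)` is symmetric in `x, y`. Orient the edge from its
lower end `z` to its upper end, along which `g` increases by `0 ≤ d ≤ κ`; since the chord slope of
`exp` is at most its derivative at the upper end, the edge term is at most
`e^{g z + d} d² ≤ e^κ e^{g z} d²`. Reversibility gives each edge the same weight in both
orientations, so summing over lower ends cancels the factor `1/2` of the Dirichlet form; the sum
over the upper ends is then at most `v₂(g)`, and the sum over the lower ends is the mean of `e^g`.
Applied to `g = γ f`, this is the claim, as `v₂` is quadratic.
-/

open Finset

noncomputable section
attribute [local instance] Classical.propDecidable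

/-- `v₂(f) = max_x Σ_y Q(x,y) (f(y) − f(x))₊²`. -/
def vTwo {Ω : Type*} [Fintype Ω] [Nonempty Ω] (Q : Ω → Ω → ℝ) (f : Ω → ℝ) : ℝ :=
  univ.sup' univ_nonempty (fun x => ∑ y, Q x y * max (f y - f x) 0 ^ 2)

section Exp

lemma exp_sub_exp_le_exp_mul_sub (a b : ℝ) :
    Real.exp b - Real.exp a ≤ Real.exp b * (b - a) :=
  calc Real.exp b - Real.exp a
      = Real.exp b * (1 - Real.exp (-(b - a))) := by
        rw [mul_sub, mul_one, ← Real.exp_add]; ring_nf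
    _ ≤ Real.exp b * (b - a) := by
        refine mul_le_mul_of_nonneg_left ?_ (Real.exp_pos b).le
        linarith [Real.one_sub_le_exp_neg (b - a)]

lemma exp_sub_exp_mul_sub_le_of_le {κ a b : ℝ} (hab : a ≤ b) (hκ : b - a ≤ κ) :
    (Real.exp b - Real.exp a) * (b - a) ≤ Real.exp κ * Real.exp a * (b - a) ^ 2 :=
  calc (Real.exp b - Real.exp a) * (b - a)
      ≤ Real.exp b * (b - a) * (b - a) :=
        mul_le_mul_of_nonneg_right (exp_sub_exp_le_exp_mul_sub a b) (sub_nonneg.2 hab)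
    _ = Real.exp b * (b - a) ^ 2 := by ring
    _ ≤ Real.exp κ * Real.exp a * (b - a) ^ 2 := by
        rw [← Real.exp_add]
        gcongr
        linarith

lemma exp_sub_exp_mul_sub_le_add {κ a b : ℝ} (hκ : |a - b| ≤ κ) :
    (Real.exp a - Real.exp b) * (a - b) ≤
      Real.exp κ * Real.exp a * max (b - a) 0 ^ 2 +
        Real.exp κ * Real.exp b * max (a - b) 0 ^ 2 := by
  wlog hab : a ≤ b generalizing a b
  · have hswap := this (abs_sub_comm a b ▸ hκ) (le_of_not_ge hab)
    linarith
  have hle := exp_sub_exp_mul_sub_le_of_le hab (abs_sub_le_iff.1 hκ).2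
  rw [max_eq_left (sub_nonneg.2 hab), max_eq_right (sub_nonpos.2 hab)]
  linarith

end Exp

section DirichletForm

variable {Ω : Type*} [Fintype Ω]

lemma sum_sum_mul_add_swap {R : Type*} [NonAssocSemiring R] {c : Ω → Ω → R}
    (hc : ∀ x y, c x y = c y x) (w : Ω → Ω → R) :
    ∑ x, ∑ y, c x y * (w x y + w y x) = 2 * ∑ x, ∑ y, c x y * w x y := by
  have hswap : ∑ x, ∑ y, c x y * w y x = ∑ x, ∑ y, c x y * w x y := by
    rw [sum_comm]
    simp only [hc]
  simp only [mul_add, sum_add_distrib, hswap, two_mul]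

lemma dirichletForm_le_sum_of_edge_le {ν : Ω → ℝ} {Q : Ω → Ω → ℝ}
    (hνQ : ∀ x y, 0 ≤ ν x * Q x y) (hrev : ∀ x y, ν x * Q x y = ν y * Q y x)
    {f g : Ω → ℝ} {w : Ω → Ω → ℝ}
    (hw : ∀ x y, 0 < ν x * Q x y → (f x - f y) * (g x - g y) ≤ w x y + w y x) :
    dirichletForm ν Q f g ≤ ∑ x, ∑ y, ν x * Q x y * w x y := by
  have hedge : ∀ x y, ν x * Q x y * (f x - f y) * (g x - g y) ≤
      ν x * Q x y * (w x y + w y x) := by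
    intro x y
    rw [mul_assoc]
    rcases (hνQ x y).eq_or_lt with hzero | hpos
    · simp only [← hzero, zero_mul, le_refl]
    · exact mul_le_mul_of_nonneg_left (hw x y hpos) hpos.le
  rw [dirichletForm, div_le_iff₀' two_pos, ← sum_sum_mul_add_swap hrev]
  exact sum_le_sum fun x _ => sum_le_sum fun y _ => hedge x y

end DirichletForm

section VTwo

variable {Ω : Type*} [Fintype Ω] [Nonempty Ω]

lemma sum_mul_sq_posPart_le_vTwo (Q : Ω → Ω → ℝ) (f : Ω → ℝ) (x : Ω) :
    ∑ y, Q x y * max (f y - f x) 0 ^ 2 ≤ vTwo Q f :=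
  le_sup' (fun x => ∑ y, Q x y * max (f y - f x) 0 ^ 2) (mem_univ x)

lemma vTwo_const_mul (Q : Ω → Ω → ℝ) (f : Ω → ℝ) {c : ℝ} (hc : 0 ≤ c) :
    vTwo Q (fun x => c * f x) = c ^ 2 * vTwo Q f := by
  have hmax : ∀ x y, max (c * f y - c * f x) 0 = c * max (f y - f x) 0 := fun x y => by
    rw [mul_max_of_nonneg _ _ hc, mul_sub, mul_zero]
  simp only [vTwo, hmax, mul_pow, mul_left_comm _ (c ^ 2), ← mul_sum]
  exact (mul₀_sup' (sq_nonneg c) _ _ _).symm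

lemma sum_sum_mul_sq_posPart_le_vTwo_mul_expect {ν u : Ω → ℝ} (hνu : ∀ x, 0 ≤ ν x * u x)
    (Q : Ω → Ω → ℝ) (f : Ω → ℝ) :
    ∑ x, ∑ y, ν x * Q x y * (u x * max (f y - f x) 0 ^ 2) ≤ vTwo Q f * expect ν u := by
  rw [_root_.expect, mul_sum]
  refine sum_le_sum fun x _ => ?_
  calc ∑ y, ν x * Q x y * (u x * max (f y - f x) 0 ^ 2)
      = (∑ y, Q x y * max (f y - f x) 0 ^ 2) * (ν x * u x) := by
        rw [sum_mul]
        exact sum_congr rfl fun y _ => by ring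
    _ ≤ vTwo Q f * (ν x * u x) :=
        mul_le_mul_of_nonneg_right (sum_mul_sq_posPart_le_vTwo Q f x) (hνu x)

variable {Q : Ω → Ω → ℝ} {ν : Ω → ℝ}

lemma dirichletForm_exp_self_le (hQ₀ : ∀ x y, 0 ≤ Q x y) (hν₀ : ∀ x, 0 ≤ ν x)
    (hrev : ∀ x y, ν x * Q x y = ν y * Q y x) {κ : ℝ} {g : Ω → ℝ}
    (hLip : ∀ x y, 0 < Q x y → g y - g x ≤ κ) :
    dirichletForm ν Q (fun x => Real.exp (g x)) g ≤
      Real.exp κ * vTwo Q g * expect ν (fun x => Real.exp (g x)) := by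
  have hLip_abs : ∀ x y, 0 < ν x * Q x y → |g x - g y| ≤ κ := fun x y hxy =>
    abs_sub_le_iff.2 ⟨hLip y x (pos_of_mul_pos_right (hrev x y ▸ hxy) (hν₀ y)),
      hLip x y (pos_of_mul_pos_right hxy (hν₀ x))⟩
  calc dirichletForm ν Q (fun x => Real.exp (g x)) g
      ≤ ∑ x, ∑ y, ν x * Q x y * (Real.exp κ * Real.exp (g x) * max (g y - g x) 0 ^ 2) :=
        dirichletForm_le_sum_of_edge_le (fun x y => mul_nonneg (hν₀ x) (hQ₀ x y)) hrev
          fun x y hxy => exp_sub_exp_mul_sub_le_add (hLip_abs x y hxy)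
    _ ≤ vTwo Q g * expect ν (fun x => Real.exp κ * Real.exp (g x)) :=
        sum_sum_mul_sq_posPart_le_vTwo_mul_expect
          (fun x => mul_nonneg (hν₀ x) (by positivity)) Q g
    _ = Real.exp κ * vTwo Q g * expect ν (fun x => Real.exp (g x)) := by
        simp only [_root_.expect, mul_left_comm _ (Real.exp κ), ← mul_sum, mul_assoc]

theorem dirichlet_exp_bound_vtwo_general (hQ₀ : ∀ x y, 0 ≤ Q x y) (hν₀ : ∀ x, 0 ≤ ν x)
    (hrev : ∀ x y, ν x * Q x y = ν y * Q y x) {κ : ℝ} {f : Ω → ℝ}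
    (hLip : ∀ x y, 0 < Q x y → f y - f x ≤ κ) {γ : ℝ} (hγ : 0 ≤ γ) :
    dirichletForm ν Q (fun x => Real.exp (γ * f x)) (fun x => γ * f x) ≤
      Real.exp (γ * κ) * γ ^ 2 * vTwo Q f *
        expect ν (fun x => Real.exp (γ * f x)) := by
  have hLip_mul : ∀ x y, 0 < Q x y → γ * f y - γ * f x ≤ γ * κ := fun x y hxy => by
    rw [← mul_sub]
    exact mul_le_mul_of_nonneg_left (hLip x y hxy) hγ
  have hle := dirichletForm_exp_self_le hQ₀ hν₀ hrev hLip_mul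
  rwa [vTwo_const_mul Q f hγ, ← mul_assoc] at hle

end VTwo

/-- Bound on the Dirichlet form `𝓔_Q(e^{γf}, γf)` in terms of
`v₂(f)` for a reversible chain whose moves increase `f` by at most `κ`. -/
theorem dirichlet_exp_bound_vtwo {Ω : Type*} [Fintype Ω] [Nonempty Ω]
    (Q : Ω → Ω → ℝ) (ν : Ω → ℝ)
    (hQ₀ : ∀ x y, 0 ≤ Q x y) (hQ₁ : ∀ x, ∑ y, Q x y = 1)
    (hν₀ : ∀ x, 0 ≤ ν x) (hν₁ : ∑ x, ν x = 1)
    (hrev : ∀ x y, ν x * Q x y = ν y * Q y x)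
    (κ : ℝ) (hκ : 0 ≤ κ) (f : Ω → ℝ)
    (hLip : ∀ x y, 0 < Q x y → f y - f x ≤ κ)
    (γ : ℝ) (hγ : 0 ≤ γ) :
    dirichletForm ν Q (fun x => Real.exp (γ * f x)) (fun x => γ * f x) ≤
      Real.exp (γ * κ) * γ ^ 2 * vTwo Q f *
        expect ν (fun x => Real.exp (γ * f x)) :=
  dirichlet_exp_bound_vtwo_general hQ₀ hν₀ hrev hLip hγ
end
end
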